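/- Let R > 0, B > 0, h > 0, and let m be a negative integer. Then for every u ∈ C_c^∞((0,R);ℂ) the fiber quadratic form at angular momentum m satisfies q_m(u) ≥ (2|m| − 1) h B ∫₀^R |u(r)|² r dr; equivalently, μ_m(h) ≥ (2|m| − 1) h B. -/

import Mathlib

/-!
The bound is pointwise in the potential. For `m < 0` the two terms of `m/r − Br/(2h)` have the same
sign, so `(a - b)² = (a + b)² - 4ab ≥ -4ab` with `a = m/r`, `b = Br/(2h)` gives
`h² (m/r − Br/(2h))² ≥ 2|m| h B` (`potential_bound`). Dropping the kinetic term `|u′|²` and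
integrating against `|u|² r dr` yields the bound on the form. All integrands are continuous on the
compact support of `u`, which stays away from `0`, hence integrable. The bound on the infimum
follows because `∫ |u|² r dr > 0` for `u ≠ 0`, and because a bump function shows that the set of
Rayleigh quotients is nonempty (the real `sInf` of the empty set being `0`).
-/

open MeasureTheory Filter Topology

noncomputable section

/-- The fiber quadratic form at angular momentum `m`:
`q_m(u) = h²∫₀^R (|u′(r)|² + (m/r − Br/(2h))²|u(r)|²) r dr − hB∫₀^R |u(r)|² r dr`. -/
def qm (R B h : ℝ) (m : ℤ) (u : ℝ → ℂ) : ℝ :=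
  h ^ 2 * (∫ r in Set.Ioo (0:ℝ) R,
      (‖deriv u r‖ ^ 2 + ((m : ℝ) / r - B * r / (2 * h)) ^ 2 * ‖u r‖ ^ 2) * r)
    - h * B * ∫ r in Set.Ioo (0:ℝ) R, ‖u r‖ ^ 2 * r

/-- `u ∈ C_c^∞((0,R); ℂ)`. -/
def IsCptSmooth0R (R : ℝ) (u : ℝ → ℂ) : Prop :=
  ContDiff ℝ (⊤ : ℕ∞) u ∧ HasCompactSupport u ∧ tsupport u ⊆ Set.Ioo 0 R

/-- The bottom of the fiber quadratic form at angular momentum `m`. -/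
def mum (R B h : ℝ) (m : ℤ) : ℝ :=
  sInf { c | ∃ u : ℝ → ℂ, IsCptSmooth0R R u ∧ u ≠ 0 ∧
    c = qm R B h m u / ∫ r in Set.Ioo (0:ℝ) R, ‖u r‖ ^ 2 * r }

theorem potential_bound {B h : ℝ} (hh : 0 < h) {m : ℤ} (hm : m < 0) {r : ℝ}
    (hr : 0 < r) : 2 * |(m : ℝ)| * h * B ≤ h ^ 2 * ((m : ℝ) / r - B * r / (2 * h)) ^ 2 := by
  have hm' : (m : ℝ) < 0 := by exact_mod_cast hm
  rw [abs_of_neg hm']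
  have e : h ^ 2 * ((m : ℝ) / r - B * r / (2 * h)) ^ 2
      = h ^ 2 * ((m : ℝ) / r + B * r / (2 * h)) ^ 2 + 2 * -(m : ℝ) * h * B := by
    field_simp
    ring
  rw [e]
  have : 0 ≤ h ^ 2 * ((m : ℝ) / r + B * r / (2 * h)) ^ 2 := by positivity
  linarith

theorem integrableOn_of_continuousOn_tsupport {R : ℝ} {u : ℝ → ℂ} (hu : IsCptSmooth0R R u)
    {f : ℝ → ℝ} (hf : ContinuousOn f (tsupport u)) (h0 : ∀ r, r ∉ tsupport u → f r = 0) :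
    IntegrableOn f (Set.Ioo 0 R) := by
  have hK : IntegrableOn f (tsupport u) := hf.integrableOn_compact hu.2.1
  exact (hK.integrable_of_forall_notMem_eq_zero h0).integrableOn

theorem mass_pos {R : ℝ} {u : ℝ → ℂ} (hu : IsCptSmooth0R R u) (hne : u ≠ 0) :
    0 < ∫ r in Set.Ioo (0:ℝ) R, ‖u r‖ ^ 2 * r := by
  obtain ⟨hs, hc, hsub⟩ := hu
  have hz : ∀ r, r ∉ Set.Ioo 0 R → u r = 0 := fun r hr =>
    image_eq_zero_of_notMem_tsupport fun hk => hr (hsub hk)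
  rw [setIntegral_eq_integral_of_forall_compl_eq_zero (fun r hr => by simp [hz r hr])]
  obtain ⟨x, hx⟩ := Function.ne_iff.1 hne
  have hx0 : 0 < x := by
    by_contra hcon
    exact hx (hz x fun hm => hcon hm.1)
  have hcont : Continuous u := hs.continuous
  refine Continuous.integral_pos_of_hasCompactSupport_nonneg_nonzero (x := x)
    (by fun_prop) ?_ ?_ ?_
  · exact hc.mono fun r hr hr0 => hr (by simp [hr0])
  · intro r
    by_cases hr : r ∈ Set.Ioo 0 R
    · have := hr.1
      simp only [Pi.zero_apply]
      positivity
    · simp [hz r hr]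
  · have : 0 < ‖u x‖ := norm_pos_iff.2 hx
    positivity

theorem exists_isCptSmooth0R_ne_zero {R : ℝ} (hR : 0 < R) :
    ∃ u : ℝ → ℂ, IsCptSmooth0R R u ∧ u ≠ 0 := by
  obtain ⟨f, hsub, hc, hs, -, h1⟩ :=
    exists_contDiff_tsupport_subset (n := ⊤) (s := Set.Ioo 0 R) (x := R / 2)
      (Ioo_mem_nhds (by linarith) (by linarith))
  refine ⟨fun r => (f r : ℂ), ⟨Complex.ofRealCLM.contDiff.comp hs, ?_, ?_⟩, fun hf => ?_⟩
  · exact hc.comp_left (g := fun x : ℝ => (x : ℂ)) (by simp)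
  · refine (closure_mono fun r hr hr0 => ?_).trans hsub
    exact hr (by simp [hr0])
  · have := congrFun hf (R / 2)
    simp [h1] at this

theorem qm_bound {R B h : ℝ} (hh : 0 < h) {m : ℤ} (hm : m < 0)
    {u : ℝ → ℂ} (hu : IsCptSmooth0R R u) :
    (2 * |(m : ℝ)| - 1) * h * B * ∫ r in Set.Ioo (0:ℝ) R, ‖u r‖ ^ 2 * r ≤ qm R B h m u := by
  have hcont : Continuous u := hu.1.continuous
  have hdcont : Continuous (deriv u) := hu.1.continuous_deriv (by simp)
  have hu0 : ∀ r, r ∉ tsupport u → u r = 0 := fun r => image_eq_zero_of_notMem_tsupport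
  have hd0 : ∀ r, r ∉ tsupport u → deriv u r = 0 := fun r hr => by
    by_contra hne
    exact hr (support_deriv_subset hne)
  have hne : ∀ r ∈ tsupport u, r ≠ 0 := fun r hr => (hu.2.2 hr).1.ne'
  have i1 : IntegrableOn (fun r => ‖u r‖ ^ 2 * r) (Set.Ioo 0 R) :=
    integrableOn_of_continuousOn_tsupport hu (by fun_prop) fun r hr => by simp [hu0 r hr]
  have i2 : IntegrableOn (fun r => (‖deriv u r‖ ^ 2 +
      ((m : ℝ) / r - B * r / (2 * h)) ^ 2 * ‖u r‖ ^ 2) * r) (Set.Ioo 0 R) := by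
    refine integrableOn_of_continuousOn_tsupport hu ?_ fun r hr => by simp [hu0 r hr, hd0 r hr]
    have hdiv : ContinuousOn (fun r : ℝ => (m : ℝ) / r) (tsupport u) :=
      continuousOn_const.div continuousOn_id hne
    fun_prop
  have key : 2 * |(m : ℝ)| * h * B * ∫ r in Set.Ioo (0:ℝ) R, ‖u r‖ ^ 2 * r ≤
      h ^ 2 * ∫ r in Set.Ioo (0:ℝ) R,
        (‖deriv u r‖ ^ 2 + ((m : ℝ) / r - B * r / (2 * h)) ^ 2 * ‖u r‖ ^ 2) * r := by
    rw [← integral_const_mul, ← integral_const_mul]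
    refine setIntegral_mono_on (i1.const_mul _) (i2.const_mul _) measurableSet_Ioo fun r hr => ?_
    have hr0 : 0 < r := hr.1
    have h1 := mul_le_mul_of_nonneg_right (potential_bound (B := B) hh hm hr0)
      (show 0 ≤ ‖u r‖ ^ 2 * r by positivity)
    have h2 : 0 ≤ h ^ 2 * (‖deriv u r‖ ^ 2 * r) := by positivity
    linarith
  unfold qm
  linarith

/-- for negative angular momentum `m`, the fiber form satisfies
`q_m(u) ≥ (2|m| − 1) h B ∫₀^R |u|² r dr`; equivalently `μ_m(h) ≥ (2|m| − 1) h B`. -/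
theorem stmt9 (R B h : ℝ) (hR : 0 < R) (hB : 0 < B) (hh : 0 < h)
    (m : ℤ) (hm : m < 0) :
    (∀ u : ℝ → ℂ, IsCptSmooth0R R u →
      qm R B h m u ≥ (2 * |(m : ℝ)| - 1) * h * B *
        ∫ r in Set.Ioo (0:ℝ) R, ‖u r‖ ^ 2 * r)
    ∧ mum R B h m ≥ (2 * |(m : ℝ)| - 1) * h * B := by
  refine ⟨fun u hu => qm_bound hh hm hu, ?_⟩
  obtain ⟨v, hv, hv0⟩ := exists_isCptSmooth0R_ne_zero hR
  refine le_csInf ⟨_, v, hv, hv0, rfl⟩ ?_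
  rintro c ⟨u, hu, hu0, rfl⟩
  exact (le_div_iff₀ (mass_pos hu hu0)).2 (qm_bound hh hm hu)
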